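/- arXiv:1906.03009 — 3 statements merged into one kernel-verified Lean document; each statement's English description precedes it below -/
import Mathlib

section
/- Let H and L be real Hilbert spaces, j : H → L a bounded linear map, L_σ a closed subspace of L with orthogonal projection P : L → L. Let V_h⁰ be a closed subspace of H, and let I_h : V_h⁰ → L be a linear map with I_h(V_h⁰) ⊆ L_σ and ‖j w − I_h w‖_L ≤ ε₁·‖w‖_H for all w ∈ V_h⁰, where ε₁ ≥ 0. Assume ‖j w‖_L ≤ C_PF·‖w‖_H for all w ∈ V_h⁰, with C_PF > 0. Let ν > 0, f ∈ L, and let v_h ∈ V_h⁰ satisfy ν·⟨v_h, w⟩_H = ⟨f, I_h w⟩_L for all w ∈ V_h⁰. Then ‖v_h‖_H ≤ (C_PF + ε₁)·ν⁻¹·‖P f‖_L. -/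
/-!
Testing the discrete problem with its own solution gives the energy identity
`ν ‖v‖² = ⟪f, R v⟫`, where `R` is the reconstruction. Since `R v` is divergence-free, changing `f`
by an element of the orthogonal complement of the divergence-free fields, that is by a gradient,
does not affect the right-hand side, so `f` may be replaced by its Helmholtz-Hodge projection
before applying the Cauchy-Schwarz inequality.
-/

open RealInnerProductSpace

section

variable {𝕜 V L : Type*} [RCLike 𝕜]

theorem inner_eq_inner_of_sub_mem_orthogonal [NormedAddCommGroup L] [InnerProductSpace 𝕜 L]
    {K : Submodule 𝕜 L} {f g y : L} (hy : y ∈ K) (hfg : f - g ∈ Kᗮ) :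
    inner 𝕜 f y = inner 𝕜 g y := by
  rw [← sub_eq_zero, ← inner_sub_left]
  exact Submodule.inner_left_of_mem_orthogonal hy hfg

theorem norm_le_add_mul_of_norm_sub_le [SeminormedAddCommGroup L] {x y : L} {C ε r : ℝ}
    (hx : ‖x‖ ≤ C * r) (hxy : ‖x - y‖ ≤ ε * r) : ‖y‖ ≤ (C + ε) * r :=
  calc
    ‖y‖ ≤ ‖x‖ + ‖x - y‖ := norm_le_norm_add_norm_sub x y
    _ ≤ C * r + ε * r := add_le_add hx hxy
    _ = (C + ε) * r := (add_mul C ε r).symm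

theorem le_mul_inv_of_mul_sq_le_mul {R : Type*} [Field R] [LinearOrder R] [IsStrictOrderedRing R]
    {ν a b : R} (hν : 0 < ν) (hb : 0 ≤ b) (h : ν * a ^ 2 ≤ b * a) : a ≤ b * ν⁻¹ := by
  rw [← div_eq_mul_inv]
  rcases le_or_gt a 0 with ha | ha
  · exact ha.trans (div_nonneg hb hν.le)
  · rw [le_div_iff₀' hν]
    refine le_of_mul_le_mul_right ?_ ha
    rwa [mul_assoc, ← sq]

theorem norm_le_of_mul_norm_sq_le_re_inner [SeminormedAddCommGroup V]
    [SeminormedAddCommGroup L] [InnerProductSpace 𝕜 L] {v : V} {g y : L} {ν M : ℝ} (hν : 0 < ν)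
    (hM : 0 ≤ M) (hy : ‖y‖ ≤ M * ‖v‖) (henergy : ν * ‖v‖ ^ 2 ≤ RCLike.re (inner 𝕜 g y)) :
    ‖v‖ ≤ M * ν⁻¹ * ‖g‖ := by
  have hquadratic : ν * ‖v‖ ^ 2 ≤ M * ‖g‖ * ‖v‖ :=
    calc
      ν * ‖v‖ ^ 2 ≤ RCLike.re (inner 𝕜 g y) := henergy
      _ ≤ ‖g‖ * ‖y‖ := re_inner_le_norm g y
      _ ≤ ‖g‖ * (M * ‖v‖) := by gcongr
      _ = M * ‖g‖ * ‖v‖ := by ring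
  rw [mul_right_comm]
  exact le_mul_inv_of_mul_sq_le_mul hν (by positivity) hquadratic

theorem discrete_stability_estimate_pressure_robust_general
    [SeminormedAddCommGroup V] [InnerProductSpace 𝕜 V]
    [NormedAddCommGroup L] [InnerProductSpace 𝕜 L]
    {K : Submodule 𝕜 L} {j R : V → L} {C ε ν : ℝ} {f g : L} {v : V}
    (hRK : ∀ w, R w ∈ K) (hj : ∀ w, ‖j w‖ ≤ C * ‖w‖) (hjR : ∀ w, ‖j w - R w‖ ≤ ε * ‖w‖)
    (hCε : 0 ≤ C + ε) (hν : 0 < ν) (hfg : f - g ∈ Kᗮ)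
    (hweak : ∀ w, (ν : 𝕜) * inner 𝕜 v w = inner 𝕜 f (R w)) :
    ‖v‖ ≤ (C + ε) * ν⁻¹ * ‖g‖ := by
  have hRv : ‖R v‖ ≤ (C + ε) * ‖v‖ := norm_le_add_mul_of_norm_sub_le (hj v) (hjR v)
  have henergy : ν * ‖v‖ ^ 2 = RCLike.re (inner 𝕜 g (R v)) := by
    rw [← inner_eq_inner_of_sub_mem_orthogonal (hRK v) hfg, ← hweak v, RCLike.re_ofReal_mul,
      inner_self_eq_norm_sq]
  exact norm_le_of_mul_norm_sq_le_re_inner hν hCε hRv henergy.le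

end

/-- Abstract form of the first part of Lemma 4.4 (discrete stability estimate for the
pressure-robust modified method): `‖v_h‖_H ≤ (C_PF + ε₁)ν⁻¹‖P f‖_L`, where `I_h` is the
reconstruction operator mapping the discretely divergence-free subspace `Vh0` into the
divergence-free fields `Lσ`, with `‖j w − I_h w‖ ≤ ε₁‖w‖` on `Vh0`. -/
theorem discrete_stability_estimate_pressure_robust
    {H L : Type*}
    [NormedAddCommGroup H] [InnerProductSpace ℝ H] [CompleteSpace H]
    [NormedAddCommGroup L] [InnerProductSpace ℝ L] [CompleteSpace L]
    (j : H →L[ℝ] L)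
    (Lσ : Submodule ℝ L) (hLσclosed : IsClosed (Lσ : Set L))
    -- `P` is the orthogonal projection of `L` onto `Lσ`
    (P : L → L) (hPmem : ∀ x, P x ∈ Lσ) (hPorth : ∀ x, x - P x ∈ Lσᗮ)
    (Vh0 : Submodule ℝ H) (hVh0closed : IsClosed (Vh0 : Set H))
    (Ih : Vh0 →ₗ[ℝ] L) (hIhLσ : ∀ w : Vh0, Ih w ∈ Lσ)
    (ε₁ : ℝ) (hε₁ : 0 ≤ ε₁)
    (hIh : ∀ w : Vh0, ‖j (w : H) - Ih w‖ ≤ ε₁ * ‖(w : H)‖)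
    (C_PF : ℝ) (hC_PF : 0 < C_PF)
    (hPF : ∀ w ∈ Vh0, ‖j w‖ ≤ C_PF * ‖w‖)
    (ν : ℝ) (hν : 0 < ν) (f : L)
    (vh : H) (hvh : vh ∈ Vh0)
    (hweak : ∀ w : Vh0, ν * ⟪vh, (w : H)⟫ = ⟪f, Ih w⟫) :
    ‖vh‖ ≤ (C_PF + ε₁) * ν⁻¹ * ‖P f‖ := by
  exact discrete_stability_estimate_pressure_robust_general (v := (⟨vh, hvh⟩ : Vh0)) hIhLσ
    (fun w => hPF w w.2) hIh (add_nonneg hC_PF.le hε₁) hν (hPorth f) hweak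
end

section
/- Let H, L, Q be real Hilbert spaces, j : H → L a bounded linear map, L_σ a closed subspace of L with orthogonal projection P : L → L, and D : H → Q a bounded linear map with ‖D w‖_Q ≤ ‖w‖_H for all w ∈ H. Let V⁰ be a closed subspace of H with j(V⁰) ⊆ L_σ and V⁰ ⊆ ker D, with orthogonal projection S : H → H onto V⁰. Let Q_h be a closed subspace of Q with orthogonal projection π_h : Q → Q, and let V_h⁰ be a closed subspace of H such that π_h(D w) = 0 for all w ∈ V_h⁰, with orthogonal projection S_h : H → H onto V_h⁰. Assume the duality estimate ‖j w − j(S w)‖_L ≤ ε₂·‖w‖_H for all w ∈ V_h⁰, with ε₂ ≥ 0. Let ν > 0, f ∈ L, and suppose there are α ∈ Q and δ_π ≥ 0 with ⟨f − P f, j w⟩_L = −⟨α, D w⟩_Q for all w ∈ H and ‖α − π_h α‖_Q ≤ δ_π·‖f − P f‖_L. If v ∈ V⁰ satisfies ν·⟨v, w⟩_H = ⟨f, j w⟩_L for all w ∈ V⁰, and v_h ∈ V_h⁰ satisfies ν·⟨v_h, w⟩_H = ⟨f, j w⟩_L for all w ∈ V_h⁰, then ‖v_h − S_h(v)‖_H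 ≤ ε₂·ν⁻¹·‖P f‖_L + δ_π·ν⁻¹·‖f − P f‖_L. -/
open RealInnerProductSpace

/-!
Put `w = vh - Sh v ∈ Vh0`. Testing the discrete equation with `w` and the continuous one with `S w`
gives `ν ‖w‖² = ⟪f, j w⟫ - ⟪f, j (S w)⟫`. The remainder `f - P f` is a gradient, hence does not see
the divergence-free field `S w`, so the right-hand side equals `⟪P f, j w - j (S w)⟫ - ⟪α, D w⟫`.
The first term is controlled by the duality estimate. In the second one `α` may be replaced by
`α - πh α`, because `D w ⊥ Qh`: a classical method only makes `D w` orthogonal to the discrete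
pressures, which is why the gradient part of `f` survives.
-/

section

open scoped InnerProductSpace

variable {𝕜 : Type*} [RCLike 𝕜]

section Seminormed

variable {E : Type*} [SeminormedAddCommGroup E] [InnerProductSpace 𝕜 E]

theorem inner_sub_inner_eq_add_of_inner_sub_eq_zero {x y a b : E} (h : ⟪x - y, b⟫_𝕜 = 0) :
    ⟪x, a⟫_𝕜 - ⟪x, b⟫_𝕜 = ⟪y, a - b⟫_𝕜 + ⟪x - y, a⟫_𝕜 := by
  simp only [inner_sub_left, inner_sub_right] at h ⊢
  linear_combination -h

theorem norm_le_norm_inv_mul_of_norm_mul_inner_self_le {ν : 𝕜} {x : E} {C : ℝ} (hν : ν ≠ 0)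
    (hC : 0 ≤ C) (h : ‖ν * ⟪x, x⟫_𝕜‖ ≤ C * ‖x‖) : ‖x‖ ≤ ‖ν‖⁻¹ * C := by
  rw [inner_self_eq_norm_sq_to_K, norm_mul, norm_pow, RCLike.norm_ofReal, abs_norm, sq,
    ← mul_assoc] at h
  rcases (norm_nonneg x).eq_or_lt with hx | hx
  · rw [← hx]
    positivity
  · exact (le_inv_mul_iff₀ (norm_pos_iff.mpr hν)).mpr (le_of_mul_le_mul_right h hx)

end Seminormed

section Normed

variable {E : Type*} [NormedAddCommGroup E] [InnerProductSpace 𝕜 E]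

theorem norm_inner_le_norm_sub_mul_norm_of_mem_orthogonal {K : Submodule 𝕜 E} {x y z : E}
    (hy : y ∈ K) (hz : z ∈ Kᗮ) : ‖⟪x, z⟫_𝕜‖ ≤ ‖x - y‖ * ‖z‖ := by
  have h_eq : ⟪x, z⟫_𝕜 = ⟪x - y, z⟫_𝕜 := by
    rw [inner_sub_left, Submodule.inner_right_of_mem_orthogonal hy hz, sub_zero]
  exact h_eq ▸ norm_inner_le_norm (x - y) z

theorem norm_inner_sub_inner_le_of_inner_sub_eq_neg_inner {L : Type*} [SeminormedAddCommGroup L]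
    [InnerProductSpace 𝕜 L] {f g a b : L} {K : Submodule 𝕜 E} {x y z : E}
    (ha : ⟪f - g, a⟫_𝕜 = -⟪x, z⟫_𝕜) (hb : ⟪f - g, b⟫_𝕜 = 0) (hy : y ∈ K) (hz : z ∈ Kᗮ) :
    ‖⟪f, a⟫_𝕜 - ⟪f, b⟫_𝕜‖ ≤ ‖g‖ * ‖a - b‖ + ‖x - y‖ * ‖z‖ := calc
  ‖⟪f, a⟫_𝕜 - ⟪f, b⟫_𝕜‖ = ‖⟪g, a - b⟫_𝕜 - ⟪x, z⟫_𝕜‖ := by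
    rw [inner_sub_inner_eq_add_of_inner_sub_eq_zero hb, ha, ← sub_eq_add_neg]
  _ ≤ ‖⟪g, a - b⟫_𝕜‖ + ‖⟪x, z⟫_𝕜‖ := norm_sub_le _ _
  _ ≤ ‖g‖ * ‖a - b‖ + ‖x - y‖ * ‖z‖ :=
    add_le_add (norm_inner_le_norm _ _) (norm_inner_le_norm_sub_mul_norm_of_mem_orthogonal hy hz)

theorem mul_inner_sub_eq_sub_of_galerkin {V Vh : Submodule 𝕜 E} {F : E → 𝕜} {ν : 𝕜}
    {v vh r w s : E} (hv : v ∈ V) (hw : w ∈ Vh) (hs : s ∈ V)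
    (hweak : ∀ u ∈ V, ν * ⟪v, u⟫_𝕜 = F u) (hweakh : ∀ u ∈ Vh, ν * ⟪vh, u⟫_𝕜 = F u)
    (hr : v - r ∈ Vhᗮ) (hws : w - s ∈ Vᗮ) : ν * ⟪vh - r, w⟫_𝕜 = F w - F s := by
  have h_discrete : ⟪v, w⟫_𝕜 = ⟪r, w⟫_𝕜 := by
    rw [← sub_eq_zero, ← inner_sub_left, Submodule.inner_left_of_mem_orthogonal hw hr]
  have h_continuous : ⟪v, w⟫_𝕜 = ⟪v, s⟫_𝕜 := by
    rw [← sub_eq_zero, ← inner_sub_right, Submodule.inner_right_of_mem_orthogonal hv hws]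
  rw [inner_sub_left, mul_sub, ← h_discrete, h_continuous, hweakh w hw, hweak s hs]

end Normed

theorem consistency_error_estimate_classical_general
    {H L Q : Type*}
    [NormedAddCommGroup H] [InnerProductSpace 𝕜 H]
    [SeminormedAddCommGroup L] [InnerProductSpace 𝕜 L]
    [NormedAddCommGroup Q] [InnerProductSpace 𝕜 Q]
    {j : H → L} {D : H → Q} (hD : ∀ w, ‖D w‖ ≤ ‖w‖)
    {V0 : Submodule 𝕜 H} (hV0kerD : ∀ w ∈ V0, D w = 0)
    {S : H → H} (hSmem : ∀ x, S x ∈ V0) (hSorth : ∀ x, x - S x ∈ V0ᗮ)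
    {Qh : Submodule 𝕜 Q} {Vh0 : Submodule 𝕜 H} (hdiscdivfree : ∀ w ∈ Vh0, D w ∈ Qhᗮ)
    {ε₂ : ℝ} (hε₂ : 0 ≤ ε₂) (hduality : ∀ w ∈ Vh0, ‖j w - j (S w)‖ ≤ ε₂ * ‖w‖)
    {ν : 𝕜} (hν : ν ≠ 0) {f fσ : L} {α q : Q} (hq : q ∈ Qh) {δπ : ℝ}
    (hα : ∀ w, ⟪f - fσ, j w⟫_𝕜 = -⟪α, D w⟫_𝕜) (hαapprox : ‖α - q‖ ≤ δπ * ‖f - fσ‖)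
    {v : H} (hv : v ∈ V0) (hweak : ∀ w ∈ V0, ν * ⟪v, w⟫_𝕜 = ⟪f, j w⟫_𝕜)
    {vh : H} (hvh : vh ∈ Vh0) (hweakh : ∀ w ∈ Vh0, ν * ⟪vh, w⟫_𝕜 = ⟪f, j w⟫_𝕜)
    {r : H} (hrmem : r ∈ Vh0) (hrorth : v - r ∈ Vh0ᗮ) :
    ‖vh - r‖ ≤ ε₂ * ‖ν‖⁻¹ * ‖fσ‖ + δπ * ‖ν‖⁻¹ * ‖f - fσ‖ := by
  set w := vh - r
  have hw : w ∈ Vh0 := Vh0.sub_mem hvh hrmem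
  have h_grad_orth : ⟪f - fσ, j (S w)⟫_𝕜 = 0 := by
    rw [hα, hV0kerD _ (hSmem w), inner_zero_right, neg_zero]
  have h_bound : ‖ν * ⟪w, w⟫_𝕜‖ ≤ (ε₂ * ‖fσ‖ + δπ * ‖f - fσ‖) * ‖w‖ := calc
    ‖ν * ⟪w, w⟫_𝕜‖ = ‖⟪f, j w⟫_𝕜 - ⟪f, j (S w)⟫_𝕜‖ := by
      rw [mul_inner_sub_eq_sub_of_galerkin hv hw (hSmem w) hweak hweakh hrorth (hSorth w)]
    _ ≤ ‖fσ‖ * ‖j w - j (S w)‖ + ‖α - q‖ * ‖D w‖ :=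
      norm_inner_sub_inner_le_of_inner_sub_eq_neg_inner (hα w) h_grad_orth hq (hdiscdivfree w hw)
    _ ≤ ‖fσ‖ * (ε₂ * ‖w‖) + δπ * ‖f - fσ‖ * ‖w‖ := by
      gcongr
      exacts [hduality w hw, (norm_nonneg _).trans hαapprox, hD w]
    _ = (ε₂ * ‖fσ‖ + δπ * ‖f - fσ‖) * ‖w‖ := by ring
  have h_nonneg : 0 ≤ ε₂ * ‖fσ‖ + δπ * ‖f - fσ‖ :=
    add_nonneg (by positivity) ((norm_nonneg _).trans hαapprox)
  calc ‖w‖ ≤ ‖ν‖⁻¹ * (ε₂ * ‖fσ‖ + δπ * ‖f - fσ‖) :=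
        norm_le_norm_inv_mul_of_norm_mul_inner_self_le hν h_nonneg h_bound
    _ = ε₂ * ‖ν‖⁻¹ * ‖fσ‖ + δπ * ‖ν‖⁻¹ * ‖f - fσ‖ := by ring

end

/-- Abstract form of Theorem 6.1 (quasi-optimal consistency error estimate for classical
conforming mixed methods): `‖v_h − S_h(v)‖_H ≤ ε₂ ν⁻¹‖P f‖_L + δ_π ν⁻¹‖f − P f‖_L`,
where `ε₂` abstracts `C₂ hˢ` of the duality estimate and `δ_π` abstracts `C_{π_h,1} h`. -/
theorem consistency_error_estimate_classical
    {H L Q : Type*}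
    [NormedAddCommGroup H] [InnerProductSpace ℝ H] [CompleteSpace H]
    [NormedAddCommGroup L] [InnerProductSpace ℝ L] [CompleteSpace L]
    [NormedAddCommGroup Q] [InnerProductSpace ℝ Q] [CompleteSpace Q]
    (j : H →L[ℝ] L)
    (Lσ : Submodule ℝ L) (hLσclosed : IsClosed (Lσ : Set L))
    -- `P` is the orthogonal projection of `L` onto `Lσ`
    (P : L → L) (hPmem : ∀ x, P x ∈ Lσ) (hPorth : ∀ x, x - P x ∈ Lσᗮ)
    (D : H →L[ℝ] Q) (hD : ∀ w : H, ‖D w‖ ≤ ‖w‖)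
    (V0 : Submodule ℝ H) (hV0closed : IsClosed (V0 : Set H))
    (hjV0 : ∀ w ∈ V0, j w ∈ Lσ) (hV0kerD : ∀ w ∈ V0, D w = 0)
    -- `S` is the orthogonal projection of `H` onto `V0` (continuous Stokes projector)
    (S : H → H) (hSmem : ∀ x, S x ∈ V0) (hSorth : ∀ x, x - S x ∈ V0ᗮ)
    (Qh : Submodule ℝ Q) (hQhclosed : IsClosed (Qh : Set Q))
    -- `πh` is the orthogonal projection of `Q` onto `Qh`
    (πh : Q → Q) (hπmem : ∀ q, πh q ∈ Qh) (hπorth : ∀ q, q - πh q ∈ Qhᗮ)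
    (Vh0 : Submodule ℝ H) (hVh0closed : IsClosed (Vh0 : Set H))
    (hdiscdivfree : ∀ w ∈ Vh0, πh (D w) = 0)
    -- `Sh` is the orthogonal projection of `H` onto `Vh0` (discrete Stokes projector)
    (Sh : H → H) (hShmem : ∀ x, Sh x ∈ Vh0) (hShorth : ∀ x, x - Sh x ∈ Vh0ᗮ)
    (ε₂ : ℝ) (hε₂ : 0 ≤ ε₂)
    (hduality : ∀ w ∈ Vh0, ‖j w - j (S w)‖ ≤ ε₂ * ‖w‖)
    (ν : ℝ) (hν : 0 < ν) (f : L)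
    (α : Q) (δπ : ℝ) (hδπ : 0 ≤ δπ)
    (hα : ∀ w : H, ⟪f - P f, j w⟫ = -⟪α, D w⟫)
    (hαapprox : ‖α - πh α‖ ≤ δπ * ‖f - P f‖)
    (v : H) (hv : v ∈ V0)
    (hweak : ∀ w ∈ V0, ν * ⟪v, w⟫ = ⟪f, j w⟫)
    (vh : H) (hvh : vh ∈ Vh0)
    (hweakh : ∀ w ∈ Vh0, ν * ⟪vh, w⟫ = ⟪f, j w⟫) :
    ‖vh - Sh v‖ ≤ ε₂ * ν⁻¹ * ‖P f‖ + δπ * ν⁻¹ * ‖f - P f‖ := by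
  have hdisc : ∀ w ∈ Vh0, D w ∈ Qhᗮ := fun w hw => by
    simpa only [hdiscdivfree w hw, sub_zero] using hπorth (D w)
  simpa only [Real.norm_of_nonneg hν.le] using
    consistency_error_estimate_classical_general hD hV0kerD hSmem hSorth hdisc hε₂ hduality
      hν.ne' (hπmem α) hα hαapprox hv hweak hvh hweakh (hShmem v) (hShorth v)
end

section
/- Under the hypotheses of the pressure-robust consistency error estimate — namely: H, L real Hilbert spaces, j : H → L bounded linear, L_σ ⊆ L closed with orthogonal projection P; V⁰ ⊆ H closed with j(V⁰) ⊆ L_σ and orthogonal projection S onto V⁰; V_h⁰ ⊆ V_h closed subspaces of H with orthogonal projection S_h onto V_h⁰; I_h : V_h⁰ → L linear with I_h(V_h⁰) ⊆ L_σ and ‖j w − I_h w‖_L ≤ ε₁‖w‖_H for all w ∈ V_h⁰; ‖j w − j(S w)‖_L ≤ ε₂‖w‖_H for all w ∈ V_h⁰; ν > 0, f ∈ L; v ∈ V⁰ with ν⟨v, w⟩_H = ⟨f, j w⟩_L for all w ∈ V⁰ and v_h ∈ V_h⁰ with ν⟨v_h, w⟩_H = ⟨f, I_h w⟩_L for all w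 ∈ V_h⁰ — assume in addition the best-approximation property ‖v − S_h(v)‖_H ≤ C_F'·inf_{w ∈ V_h} ‖v − w‖_H for some C_F' ≥ 1. Then ‖v − v_h‖²_H ≤ C_F'²·(inf_{w ∈ V_h} ‖v − w‖_H)² + ((ε₁ + ε₂)·ν⁻¹·‖P f‖_L)². -/
/-!
The discrete error `e = vh - Sh v`, with `Sh` the orthogonal projection onto `Vh0`, lies in `Vh0`.
For `w ∈ Vh0`, the two weak formulations give `ν ⟪e, w⟫ = ⟪f, Ih w - j (S w)⟫`, because
`⟪Sh v, w⟫ = ⟪v, w⟫ = ⟪v, S w⟫`. The field `Ih w - j (S w)` lies in `Lσ`, so `f` may be replaced by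
`P f`; this is where pressure-robustness comes from. The choice `w = e` then bounds `‖e‖`, and
Pythagoras adds the best-approximation error `v - Sh v`, which is orthogonal to `Vh0`.
-/

open RealInnerProductSpace

section InnerProduct

open scoped InnerProductSpace

variable {𝕜 E : Type*} [RCLike 𝕜] [NormedAddCommGroup E] [InnerProductSpace 𝕜 E]

theorem norm_le_of_norm_inner_self_le {x : E} {C : ℝ} (hC : 0 ≤ C) (h : ‖⟪x, x⟫_𝕜‖ ≤ C * ‖x‖) :
    ‖x‖ ≤ C := by
  rcases eq_or_ne x 0 with rfl | hx
  · simpa using hC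
  · rw [inner_self_eq_norm_sq_to_K, norm_pow, RCLike.norm_ofReal, abs_norm, sq] at h
    exact le_of_mul_le_mul_right h (norm_pos_iff.mpr hx)

variable {K : Submodule 𝕜 E}

theorem exists_hasOrthogonalProjection_eq_starProjection {p : E → E}
    (hmem : ∀ x, p x ∈ K) (horth : ∀ x, x - p x ∈ Kᗮ) :
    ∃ _ : K.HasOrthogonalProjection, p = K.starProjection := by
  have hK : K.HasOrthogonalProjection := ⟨fun x ↦ ⟨p x, hmem x, horth x⟩⟩
  exact ⟨hK, funext fun x ↦ (K.eq_starProjection_of_mem_orthogonal (hmem x) (horth x)).symm⟩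

variable [K.HasOrthogonalProjection]

theorem inner_starProjection_left_of_mem (x : E) {y : E} (hy : y ∈ K) :
    ⟪K.starProjection x, y⟫_𝕜 = ⟪x, y⟫_𝕜 :=
  K.inner_orthogonalProjectionOnto_eq_of_mem_right ⟨y, hy⟩ x

theorem inner_starProjection_right_of_mem {x : E} (hx : x ∈ K) (y : E) :
    ⟪x, K.starProjection y⟫_𝕜 = ⟪x, y⟫_𝕜 :=
  K.inner_orthogonalProjectionOnto_eq_of_mem_left ⟨x, hx⟩ y

theorem norm_inner_le_norm_starProjection_mul_norm (x : E) {y : E} (hy : y ∈ K) :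
    ‖⟪x, y⟫_𝕜‖ ≤ ‖K.starProjection x‖ * ‖y‖ := by
  rw [← inner_starProjection_left_of_mem x hy]
  exact norm_inner_le_norm _ _

theorem norm_sub_sq_eq_norm_sub_starProjection_sq_add (x : E) {y : E} (hy : y ∈ K) :
    ‖x - y‖ ^ 2 = ‖x - K.starProjection x‖ ^ 2 + ‖y - K.starProjection x‖ ^ 2 := by
  rw [K.norm_sq_eq_add_norm_sq_starProjection (x - y), K.starProjection_orthogonal_val, map_sub,
    K.starProjection_eq_self_iff.mpr hy, sub_sub_sub_cancel_right, norm_sub_rev _ y, add_comm]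

end InnerProduct

section DiscreteStokes

open scoped InnerProductSpace

variable {𝕜 H L : Type*} [RCLike 𝕜]
  [NormedAddCommGroup H] [InnerProductSpace 𝕜 H]
  [NormedAddCommGroup L] [InnerProductSpace 𝕜 L]
  {j : H → L} {V0 Vh0 : Submodule 𝕜 H} [V0.HasOrthogonalProjection] {Ih : Vh0 → L}

theorem norm_inner_consistency_error_le {Lσ : Submodule 𝕜 L} [Lσ.HasOrthogonalProjection]
    (hjV0 : ∀ w ∈ V0, j w ∈ Lσ) (hIhLσ : ∀ w : Vh0, Ih w ∈ Lσ)
    {ε₁ ε₂ : ℝ} (hIh : ∀ w : Vh0, ‖j (w : H) - Ih w‖ ≤ ε₁ * ‖(w : H)‖)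
    (hduality : ∀ w ∈ Vh0, ‖j w - j (V0.starProjection w)‖ ≤ ε₂ * ‖w‖) (f : L) (w : Vh0) :
    ‖⟪f, Ih w - j (V0.starProjection w)⟫_𝕜‖
      ≤ (ε₁ + ε₂) * ‖Lσ.starProjection f‖ * ‖(w : H)‖ := by
  have hmem : Ih w - j (V0.starProjection w) ∈ Lσ :=
    Lσ.sub_mem (hIhLσ w) (hjV0 _ (V0.starProjection_apply_mem _))
  have hnorm : ‖Ih w - j (V0.starProjection w)‖ ≤ (ε₁ + ε₂) * ‖(w : H)‖ := calc
    _ ≤ ‖Ih w - j w‖ + ‖j w - j (V0.starProjection w)‖ := norm_sub_le_norm_sub_add_norm_sub ..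
    _ ≤ ε₁ * ‖(w : H)‖ + ε₂ * ‖(w : H)‖ :=
      add_le_add (norm_sub_rev (Ih w) (j w) ▸ hIh w) (hduality w w.2)
    _ = (ε₁ + ε₂) * ‖(w : H)‖ := (add_mul ..).symm
  calc ‖⟪f, Ih w - j (V0.starProjection w)⟫_𝕜‖
      ≤ ‖Lσ.starProjection f‖ * ‖Ih w - j (V0.starProjection w)‖ :=
        norm_inner_le_norm_starProjection_mul_norm f hmem
    _ ≤ ‖Lσ.starProjection f‖ * ((ε₁ + ε₂) * ‖(w : H)‖) := by gcongr
    _ = (ε₁ + ε₂) * ‖Lσ.starProjection f‖ * ‖(w : H)‖ := by ring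

variable {Lσ : Submodule 𝕜 L} [Lσ.HasOrthogonalProjection] [Vh0.HasOrthogonalProjection]
  {ν : 𝕜} {f : L} {v vh : H}

theorem mul_inner_discrete_error_eq_inner_consistency_error (hv : v ∈ V0)
    (hweak : ∀ w ∈ V0, ν * ⟪v, w⟫_𝕜 = ⟪f, j w⟫_𝕜)
    (hweakh : ∀ w : Vh0, ν * ⟪vh, (w : H)⟫_𝕜 = ⟪f, Ih w⟫_𝕜) (w : Vh0) :
    ν * ⟪vh - Vh0.starProjection v, (w : H)⟫_𝕜 = ⟪f, Ih w - j (V0.starProjection w)⟫_𝕜 := by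
  rw [inner_sub_left, inner_starProjection_left_of_mem v w.2,
    ← inner_starProjection_right_of_mem hv, mul_sub, hweakh,
    hweak _ (V0.starProjection_apply_mem _), inner_sub_right]

theorem norm_discrete_error_le (hjV0 : ∀ w ∈ V0, j w ∈ Lσ) (hIhLσ : ∀ w : Vh0, Ih w ∈ Lσ)
    {ε₁ : ℝ} (hε₁ : 0 ≤ ε₁) (hIh : ∀ w : Vh0, ‖j (w : H) - Ih w‖ ≤ ε₁ * ‖(w : H)‖)
    {ε₂ : ℝ} (hε₂ : 0 ≤ ε₂)
    (hduality : ∀ w ∈ Vh0, ‖j w - j (V0.starProjection w)‖ ≤ ε₂ * ‖w‖)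
    (hν : ν ≠ 0) (hv : v ∈ V0) (hweak : ∀ w ∈ V0, ν * ⟪v, w⟫_𝕜 = ⟪f, j w⟫_𝕜)
    (hvh : vh ∈ Vh0) (hweakh : ∀ w : Vh0, ν * ⟪vh, (w : H)⟫_𝕜 = ⟪f, Ih w⟫_𝕜) :
    ‖vh - Vh0.starProjection v‖ ≤ (ε₁ + ε₂) * ‖ν‖⁻¹ * ‖Lσ.starProjection f‖ := by
  let e : Vh0 := ⟨vh - Vh0.starProjection v, Vh0.sub_mem hvh (Vh0.starProjection_apply_mem v)⟩
  refine norm_le_of_norm_inner_self_le (𝕜 := 𝕜) (x := (e : H)) (by positivity) ?_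
  calc ‖⟪(e : H), (e : H)⟫_𝕜‖
      = ‖ν‖⁻¹ * ‖ν * ⟪(e : H), (e : H)⟫_𝕜‖ := by
        rw [norm_mul, inv_mul_cancel_left₀ (norm_ne_zero_iff.mpr hν)]
    _ = ‖ν‖⁻¹ * ‖⟪f, Ih e - j (V0.starProjection e)⟫_𝕜‖ := by
        rw [mul_inner_discrete_error_eq_inner_consistency_error hv hweak hweakh e]
    _ ≤ ‖ν‖⁻¹ * ((ε₁ + ε₂) * ‖Lσ.starProjection f‖ * ‖(e : H)‖) := by
        gcongr
        exact norm_inner_consistency_error_le hjV0 hIhLσ hIh hduality f e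
    _ = (ε₁ + ε₂) * ‖ν‖⁻¹ * ‖Lσ.starProjection f‖ * ‖(e : H)‖ := by ring

theorem a_priori_error_estimate_pressure_robust_general {Vh : Submodule 𝕜 H}
    (hjV0 : ∀ w ∈ V0, j w ∈ Lσ) (hIhLσ : ∀ w : Vh0, Ih w ∈ Lσ)
    {ε₁ : ℝ} (hε₁ : 0 ≤ ε₁) (hIh : ∀ w : Vh0, ‖j (w : H) - Ih w‖ ≤ ε₁ * ‖(w : H)‖)
    {ε₂ : ℝ} (hε₂ : 0 ≤ ε₂)
    (hduality : ∀ w ∈ Vh0, ‖j w - j (V0.starProjection w)‖ ≤ ε₂ * ‖w‖)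
    (hν : ν ≠ 0) (hv : v ∈ V0) (hweak : ∀ w ∈ V0, ν * ⟪v, w⟫_𝕜 = ⟪f, j w⟫_𝕜)
    (hvh : vh ∈ Vh0) (hweakh : ∀ w : Vh0, ν * ⟪vh, (w : H)⟫_𝕜 = ⟪f, Ih w⟫_𝕜)
    {C : ℝ} (hbestapprox : ‖v - Vh0.starProjection v‖ ≤ C * ⨅ w : Vh, ‖v - (w : H)‖) :
    ‖v - vh‖ ^ 2 ≤ C ^ 2 * (⨅ w : Vh, ‖v - (w : H)‖) ^ 2
      + ((ε₁ + ε₂) * ‖ν‖⁻¹ * ‖Lσ.starProjection f‖) ^ 2 := by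
  rw [norm_sub_sq_eq_norm_sub_starProjection_sq_add v hvh, ← mul_pow]
  gcongr
  exact norm_discrete_error_le hjV0 hIhLσ hε₁ hIh hε₂ hduality hν hv hweak hvh hweakh

end DiscreteStokes

/-- Abstract form of Theorem 7.2 (pressure-robust a priori error estimate):
`‖v − v_h‖² ≤ C_F'²(inf_{w ∈ V_h}‖v − w‖)² + ((ε₁ + ε₂)ν⁻¹‖P f‖)²`. -/
theorem a_priori_error_estimate_pressure_robust
    {H L : Type*}
    [NormedAddCommGroup H] [InnerProductSpace ℝ H] [CompleteSpace H]
    [NormedAddCommGroup L] [InnerProductSpace ℝ L] [CompleteSpace L]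
    (j : H →L[ℝ] L)
    (Lσ : Submodule ℝ L) (hLσclosed : IsClosed (Lσ : Set L))
    -- `P` is the orthogonal projection of `L` onto `Lσ`
    (P : L → L) (hPmem : ∀ x, P x ∈ Lσ) (hPorth : ∀ x, x - P x ∈ Lσᗮ)
    (V0 : Submodule ℝ H) (hV0closed : IsClosed (V0 : Set H))
    (hjV0 : ∀ w ∈ V0, j w ∈ Lσ)
    -- `S` is the orthogonal projection of `H` onto `V0` (continuous Stokes projector)
    (S : H → H) (hSmem : ∀ x, S x ∈ V0) (hSorth : ∀ x, x - S x ∈ V0ᗮ)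
    (Vh0 Vh : Submodule ℝ H) (hVh0Vh : Vh0 ≤ Vh)
    (hVh0closed : IsClosed (Vh0 : Set H)) (hVhclosed : IsClosed (Vh : Set H))
    -- `Sh` is the orthogonal projection of `H` onto `Vh0` (discrete Stokes projector)
    (Sh : H → H) (hShmem : ∀ x, Sh x ∈ Vh0) (hShorth : ∀ x, x - Sh x ∈ Vh0ᗮ)
    (Ih : Vh0 →ₗ[ℝ] L) (hIhLσ : ∀ w : Vh0, Ih w ∈ Lσ)
    (ε₁ : ℝ) (hε₁ : 0 ≤ ε₁)
    (hIh : ∀ w : Vh0, ‖j (w : H) - Ih w‖ ≤ ε₁ * ‖(w : H)‖)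
    (ε₂ : ℝ) (hε₂ : 0 ≤ ε₂)
    (hduality : ∀ w ∈ Vh0, ‖j w - j (S w)‖ ≤ ε₂ * ‖w‖)
    (ν : ℝ) (hν : 0 < ν) (f : L)
    (v : H) (hv : v ∈ V0)
    (hweak : ∀ w ∈ V0, ν * ⟪v, w⟫ = ⟪f, j w⟫)
    (vh : H) (hvh : vh ∈ Vh0)
    (hweakh : ∀ w : Vh0, ν * ⟪vh, (w : H)⟫ = ⟪f, Ih w⟫)
    (C_F' : ℝ) (hC_F' : 1 ≤ C_F')
    (hbestapprox : ‖v - Sh v‖ ≤ C_F' * ⨅ w : Vh, ‖v - (w : H)‖) :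
    ‖v - vh‖ ^ 2 ≤ C_F' ^ 2 * (⨅ w : Vh, ‖v - (w : H)‖) ^ 2
      + ((ε₁ + ε₂) * ν⁻¹ * ‖P f‖) ^ 2 := by
  obtain ⟨_, rfl⟩ := exists_hasOrthogonalProjection_eq_starProjection hPmem hPorth
  obtain ⟨_, rfl⟩ := exists_hasOrthogonalProjection_eq_starProjection hSmem hSorth
  obtain ⟨_, rfl⟩ := exists_hasOrthogonalProjection_eq_starProjection hShmem hShorth
  simpa only [Real.norm_of_nonneg hν.le] using a_priori_error_estimate_pressure_robust_general
    hjV0 hIhLσ hε₁ hIh hε₂ hduality hν.ne' hv hweak hvh hweakh hbestapprox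
end
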